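/- Let a, b be integers, p a prime with p not dividing b, and B a positive integer with B < p. Then the following are equivalent: (1) for every j with 1 ≤ j ≤ B, the Legendre symbol ((a²-jb)/p) ≠ 1; (2) B ≤ p - 1 - max T, where T is the set of s ∈ {0,1,...,p-1} such that there exists an integer x with x not divisible by p and x² ≡ a² + s·b (mod p). -/

import Mathlib

lemma legendre_aux (p : ℕ) [Fact p.Prime] (m : ℤ) :
    legendreSym p m = 1 ↔ ∃ x : ℤ, ¬ (p : ℤ) ∣ x ∧ ((x ^ 2 : ℤ) : ZMod p) = (m : ZMod p) := by
  by_cases h0 : (m : ZMod p) = 0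
  · rw [(legendreSym.eq_zero_iff p m).2 h0]
    refine ⟨fun h => by simp at h, ?_⟩
    rintro ⟨x, hx, h⟩
    rw [h0] at h
    push_cast at h
    exact absurd ((ZMod.intCast_zmod_eq_zero_iff_dvd x p).1 (pow_eq_zero_iff (two_ne_zero) |>.1 h)) hx
  · rw [legendreSym.eq_one_iff p h0]
    constructor
    · rintro ⟨y, hy⟩
      obtain ⟨x, rfl⟩ := ZMod.intCast_surjective y
      refine ⟨x, fun hd => h0 ?_, ?_⟩
      · rw [hy, (ZMod.intCast_zmod_eq_zero_iff_dvd x p).2 hd, mul_zero]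
      · rw [hy]; push_cast; ring
    · rintro ⟨x, -, h⟩
      exact ⟨(x : ZMod p), by rw [← h]; push_cast; ring⟩

/-- Equivalence of the non-quadratic-residue condition with the bound on `B`
by `p - 1 - max T`. -/
theorem legendre_condition_equiv (a b : ℤ) (p : ℕ) [Fact p.Prime]
    (hb : ¬ (p : ℤ) ∣ b) (B : ℕ) (hB : 1 ≤ B) (hBp : B < p) :
    (∀ j : ℕ, 1 ≤ j → j ≤ B → legendreSym p (a ^ 2 - j * b) ≠ 1) ↔
      B ≤ p - 1 - sSup {s : ℕ | s < p ∧
        ∃ x : ℤ, ¬ (p : ℤ) ∣ x ∧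
          ((x ^ 2 : ℤ) : ZMod p) = ((a ^ 2 + s * b : ℤ) : ZMod p)} := by
  set T : Set ℕ := {s : ℕ | s < p ∧
        ∃ x : ℤ, ¬ (p : ℤ) ∣ x ∧
          ((x ^ 2 : ℤ) : ZMod p) = ((a ^ 2 + s * b : ℤ) : ZMod p)} with hT
  have hbdd : BddAbove T := ⟨p, fun s hs => hs.1.le⟩
  have key : ∀ j s : ℕ, 1 ≤ j → j + s = p →
      (legendreSym p (a ^ 2 - j * b) = 1 ↔ s ∈ T) := by
    intro j s hj hjs
    have hc : ((a ^ 2 - j * b : ℤ) : ZMod p) = ((a ^ 2 + s * b : ℤ) : ZMod p) := by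
      have h : (j : ZMod p) + s = 0 := by
        rw [← Nat.cast_add, hjs, ZMod.natCast_self]
      push_cast
      linear_combination (-(b : ZMod p)) * h
    rw [legendre_aux, hc]
    exact ⟨fun h => ⟨by omega, h⟩, fun h => h.2⟩
  constructor
  · intro h
    have : sSup T ≤ p - 1 - B := by
      apply csSup_le'
      intro s hs
      by_contra hlt
      have hsp := hs.1
      exact h (p - s) (by omega) (by omega) ((key (p - s) s (by omega) (by omega)).2 hs)
    omega
  · intro h j hj hjB hl
    have := le_csSup hbdd ((key j (p - j) hj (by omega)).1 hl)
    omega
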